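/- Let G be a finite group and d ≥ 1. Let Ψ_d be the set of all group homomorphisms ψ : G → O(d, ℝ), and let Ĝ be the set of characters of the complex irreducible representations of G. Then ⋂_{ψ∈Ψ_d} ker(ψ) = ⋂ { ker(χ) : χ ∈ Ĝ with deg_ℝ(χ) ≤ d }. -/

import Mathlib

open scoped Classical in
/-- The "real degree" `deg_ℝ(χ)` of the character of `V`: the degree of `V` if the
Frobenius–Schur indicator of its character equals `1`, and twice the degree otherwise. -/
noncomputable def realDeg {G : Type} [Group G] [Fintype G] (V : FDRep ℂ G) : ℕ :=
  if (Fintype.card G : ℂ)⁻¹ * ∑ g : G, V.character (g ^ 2) = 1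
  then Module.finrank ℂ V
  else 2 * Module.finrank ℂ V

open scoped ComplexOrder MatrixOrder Matrix.Norms.L2Operator in
/-- A positive definite matrix is `Rᴴ * R` for an invertible `R`. -/
theorem Matrix.PosDef.exists_units_eq_star_mul_self {𝕜 n : Type*} [RCLike 𝕜] [Fintype n]
    [DecidableEq n] {S : Matrix n n 𝕜} (hS : S.PosDef) :
    ∃ R : (Matrix n n 𝕜)ˣ, S = star (R : Matrix n n 𝕜) * R := by
  obtain ⟨R, hR, h⟩ := CStarAlgebra.isStrictlyPositive_iff_eq_star_mul_self.mp
    hS.isStrictlyPositive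
  exact ⟨hR.unit, h⟩

open scoped ComplexOrder in
/-- Every finite-dimensional matrix representation of a finite group is conjugate to a unitary
one. -/
theorem exists_units_conj_mem_unitaryGroup {𝕜 n G : Type*} [RCLike 𝕜] [Fintype n]
    [DecidableEq n] [Group G] [Fintype G] (M : G →* Matrix n n 𝕜) :
    ∃ R : (Matrix n n 𝕜)ˣ, ∀ g, (R : Matrix n n 𝕜) * M g * (R⁻¹ : (Matrix n n 𝕜)ˣ) ∈
      Matrix.unitaryGroup n 𝕜 := by
  have hpos : (∑ g, star (M g) * M g).PosDef := by
    refine Matrix.posDef_sum (Finset.univ_nonempty) fun g _ => ?_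
    refine Matrix.PosDef.conjTranspose_mul_self _ (Matrix.mulVec_injective_of_isUnit ?_)
    exact (Group.isUnit g).map M
  obtain ⟨R, hR⟩ := hpos.exists_units_eq_star_mul_self
  refine ⟨R, fun g => ?_⟩
  have hinv : star (M g) * (star (R : Matrix n n 𝕜) * R) * M g = star (R : Matrix n n 𝕜) * R := by
    rw [← hR, Finset.mul_sum, Finset.sum_mul]
    refine Fintype.sum_equiv (Equiv.mulRight g) _ _ fun h => ?_
    simp [mul_assoc]
  rw [Matrix.mem_unitaryGroup_iff']
  have h1 : star ((R⁻¹ : (Matrix n n 𝕜)ˣ) : Matrix n n 𝕜) * star (R : Matrix n n 𝕜) = 1 := by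
    rw [← star_mul, Units.mul_inv, star_one]
  calc _ = star ((R⁻¹ : (Matrix n n 𝕜)ˣ) : Matrix n n 𝕜) *
        (star (M g) * (star (R : Matrix n n 𝕜) * R) * M g) * (R⁻¹ : (Matrix n n 𝕜)ˣ) := by
        simp only [star_mul, mul_assoc]
    _ = (star ((R⁻¹ : (Matrix n n 𝕜)ˣ) : Matrix n n 𝕜) * star (R : Matrix n n 𝕜)) *
        (R * (R⁻¹ : (Matrix n n 𝕜)ˣ)) := by rw [hinv]; simp only [mul_assoc]
    _ = 1 := by rw [h1, Units.mul_inv, one_mul]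

/-- A unitary matrix whose trace equals its size is the identity. -/
theorem Matrix.eq_one_of_mem_unitaryGroup_of_trace_eq {n : Type*} [Fintype n] [DecidableEq n]
    {U : Matrix n n ℂ} (hU : U ∈ Matrix.unitaryGroup n ℂ) (h : U.trace = Fintype.card n) :
    U = 1 := by
  have hre : ∑ i, (1 - (U i i).re) = 0 := by
    have := congrArg Complex.re h
    simp only [Matrix.trace, Matrix.diag, Complex.re_sum, Complex.natCast_re] at this
    simp [this]
  have hle (i : n) : 0 ≤ 1 - (U i i).re := by
    have := (Complex.re_le_norm _).trans (entry_norm_bound_of_unitary hU i i)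
    linarith
  have hdiag (i : n) : (U i i).re = 1 := by
    have := (Finset.sum_eq_zero_iff_of_nonneg fun i _ => hle i).mp hre i (Finset.mem_univ i)
    linarith
  have hcol (j : n) : ∑ i, Complex.normSq (U i j) = 1 := by
    have := congrFun₂ (Matrix.mem_unitaryGroup_iff'.mp hU) j j
    rw [Matrix.mul_apply, Matrix.one_apply_eq] at this
    apply Complex.ofReal_injective
    rw [Complex.ofReal_one, ← this, Complex.ofReal_sum]
    exact Finset.sum_congr rfl fun i _ => Complex.normSq_eq_conj_mul_self
  have hsum (j : n) : ∑ i, Complex.normSq (U i j - (1 : Matrix n n ℂ) i j) = 0 := by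
    have : ∀ i, Complex.normSq (U i j - (1 : Matrix n n ℂ) i j) =
        Complex.normSq (U i j) + if i = j then 1 - 2 * (U i j).re else 0 := by
      intro i
      by_cases hij : i = j
      · subst hij
        simp [Complex.normSq_apply]
        ring
      · simp [hij]
    simp only [this, Finset.sum_add_distrib, hcol, Finset.sum_ite_eq', Finset.mem_univ, if_true,
      hdiag]
    norm_num
  ext i j
  have := (Finset.sum_eq_zero_iff_of_nonneg fun i _ => Complex.normSq_nonneg _).mp (hsum j) i
    (Finset.mem_univ i)
  exact sub_eq_zero.mp (Complex.normSq_eq_zero.mp this)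

/-- A real representation of a finite group of dimension at most `d` factors, up to its kernel,
through an orthogonal representation of dimension `d`. -/
theorem Representation.exists_orthogonalGroup_hom {G W : Type*} [Group G] [Fintype G]
    [AddCommGroup W] [Module ℝ W] [FiniteDimensional ℝ W] (ρ : Representation ℝ G W) {d : ℕ}
    (hd : Module.finrank ℝ W ≤ d) :
    ∃ ψ : G →* Matrix.orthogonalGroup (Fin d) ℝ, ∀ g, ψ g = 1 → ρ g = 1 := by
  let σ : Representation ℝ G (W × (Fin (d - Module.finrank ℝ W) → ℝ)) := ρ.prod 1
  have hrank : Module.finrank ℝ (W × (Fin (d - Module.finrank ℝ W) → ℝ)) = d := by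
    simp [hd]
  let b := Module.finBasisOfFinrankEq ℝ _ hrank
  let M : G →* Matrix (Fin d) (Fin d) ℝ := (LinearMap.toMatrixAlgEquiv b).toMonoidHom.comp σ
  obtain ⟨R, hR⟩ := exists_units_conj_mem_unitaryGroup M
  refine ⟨{ toFun g := ⟨_, hR g⟩, map_one' := ?_, map_mul' := ?_ }, fun g hg => ?_⟩
  · ext1; simp
  · intro g h
    ext1
    simp [mul_assoc]
  · have h1 : (R : Matrix (Fin d) (Fin d) ℝ) * M g * (R⁻¹ : (Matrix (Fin d) (Fin d) ℝ)ˣ) = 1 :=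
      congrArg Subtype.val hg
    have h2 : M g = 1 := by
      rw [Units.mul_inv_eq_one] at h1
      exact R.isUnit.mul_left_cancel (by rw [h1, mul_one])
    have h3 : σ g = 1 := (LinearMap.toMatrixAlgEquiv b).injective (h2.trans (map_one _).symm)
    ext w
    exact congrArg Prod.fst (LinearMap.congr_fun h3 (w, 0))

open Matrix

/-- For a nonzero complex symmetric matrix `S`, the conjugate-linear map `v ↦ star (S *ᵥ v)` has a
nonzero real eigenvalue. -/
theorem Matrix.IsSymm.exists_star_mulVec_eq_smul {n : ℕ} {S : Matrix (Fin n) (Fin n) ℂ}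
    (hS : S.IsSymm) (h0 : S ≠ 0) :
    ∃ μ : ℝ, μ ≠ 0 ∧ ∃ v : Fin n → ℂ, v ≠ 0 ∧ star (S *ᵥ v) = μ • v := by
  let A : EuclideanSpace ℂ (Fin n) →ₗ[ℝ] EuclideanSpace ℂ (Fin n) :=
    { toFun v := WithLp.toLp 2 (star (S *ᵥ v.ofLp))
      map_add' v w := by ext i; simp [mulVec_add]
      map_smul' c v := by ext i; simp [mulVec_smul] }
  have hA : A.IsSymmetric := by
    intro v w
    have key : star (S *ᵥ v.ofLp) ⬝ᵥ star w.ofLp = star v.ofLp ⬝ᵥ star (S *ᵥ w.ofLp) := by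
      rw [star_dotProduct_star, star_dotProduct_star, dotProduct_mulVec, ← mulVec_transpose,
        hS.eq]
    have := congrArg Complex.re key
    simpa [A, PiLp.inner_apply, dotProduct, Complex.inner, mul_comm] using this
  by_contra! hcon
  have hbot (μ : ℝ) (hμ : μ ≠ 0) : Module.End.eigenspace A μ = ⊥ := by
    rw [Submodule.eq_bot_iff]
    intro v hv
    by_contra hv0
    refine hcon μ hμ v.ofLp (by simpa using hv0) ?_
    exact congrArg WithLp.ofLp (Module.End.mem_eigenspace_iff.mp hv)
  have hker : Module.End.eigenspace A 0 = ⊤ := by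
    have h := Submodule.orthogonal_eq_bot_iff.mp hA.orthogonalComplement_iSup_eigenspaces_eq_bot
    rw [eq_top_iff, ← h]
    refine iSup_le fun μ => ?_
    by_cases hμ : μ = 0
    · rw [hμ]
    · rw [hbot μ hμ]; exact bot_le
  apply h0
  refine Matrix.ext_of_mulVec_single fun j => ?_
  have hj : WithLp.toLp 2 (Pi.single j 1) ∈ Module.End.eigenspace A 0 := hker ▸ Submodule.mem_top
  rw [Module.End.mem_eigenspace_iff, zero_smul] at hj
  have := congrArg WithLp.ofLp hj
  rw [zero_mulVec]
  exact star_eq_zero.mp this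

/-- An invariant nonzero symmetric bilinear form on a unitary representation of dimension `n`
yields a nonzero invariant real subspace of real dimension at most `n`. -/
theorem exists_real_submodule_of_isSymm {G : Type*} [Group G] {n : ℕ}
    {M : G →* Matrix (Fin n) (Fin n) ℂ} (hM : ∀ g, M g ∈ unitaryGroup (Fin n) ℂ)
    {S : Matrix (Fin n) (Fin n) ℂ} (hS : S.IsSymm) (h0 : S ≠ 0)
    (hinv : ∀ g, (M g)ᵀ * S * M g = S) :
    ∃ W : Submodule ℝ (Fin n → ℂ), W ≠ ⊥ ∧ (∀ g, ∀ v ∈ W, M g *ᵥ v ∈ W) ∧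
      Module.finrank ℝ W ≤ n := by
  obtain ⟨μ, hμ, v, hv, hSv⟩ := hS.exists_star_mulVec_eq_smul h0
  let W : Submodule ℝ (Fin n → ℂ) :=
    { carrier := {w | star (S *ᵥ w) = μ • w}
      add_mem' {a b} ha hb := by
        simp only [Set.mem_ofPred_eq] at ha hb ⊢
        rw [mulVec_add, star_add, ha, hb, smul_add]
      zero_mem' := by simp
      smul_mem' c a ha := by
        simp only [Set.mem_ofPred_eq] at ha ⊢
        rw [mulVec_smul, star_smul, ha, star_trivial, smul_comm] }
  have hmem (w) : w ∈ W ↔ star (S *ᵥ w) = μ • w := Iff.rfl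
  refine ⟨W, fun h => hv ?_, fun g w hw => ?_, ?_⟩
  · rw [← Submodule.mem_bot ℝ, ← h]
    exact hSv
  · rw [hmem] at hw ⊢
    have hSM : S * M g = (M g).map star * S := by
      have h1 : (M g).map star * (M g)ᵀ = 1 := by
        have := congrArg Matrix.transpose (mem_unitaryGroup_iff.mp (hM g))
        rwa [transpose_mul, transpose_one, star_eq_conjTranspose, conjTranspose,
          transpose_map, transpose_transpose] at this
      calc S * M g = (M g).map star * (M g)ᵀ * (S * M g) := by rw [h1, one_mul]
        _ = (M g).map star * ((M g)ᵀ * S * M g) := by simp only [mul_assoc]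
        _ = _ := by rw [hinv]
    have hstar (x : Fin n → ℂ) : star ((M g).map star *ᵥ x) = M g *ᵥ star x := by
      ext i
      simp [mulVec, dotProduct]
    rw [mulVec_mulVec, hSM, ← mulVec_mulVec, hstar, hw, mulVec_smul]
  · let J : (Fin n → ℂ) ≃ₗ[ℝ] (Fin n → ℂ) :=
      (LinearEquiv.smulOfNeZero ℂ (Fin n → ℂ) Complex.I Complex.I_ne_zero).restrictScalars ℝ
    have hdisj : Disjoint W (W.map J.toLinearMap) := by
      rw [Submodule.disjoint_def]
      rintro w hw ⟨u, hu, rfl⟩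
      have hJ : J.toLinearMap u = Complex.I • u := rfl
      rw [hJ] at hw ⊢
      have hu' : star (S *ᵥ u) = μ • u := hu
      rw [hmem, mulVec_smul, star_smul, hu'] at hw
      have h2 : (2 * μ : ℂ) • (Complex.I • u) = 0 := by
        ext i
        have := congrFun hw i
        simp only [Pi.smul_apply, Pi.zero_apply, smul_eq_mul, Complex.real_smul,
          RCLike.star_def, Complex.conj_I] at this ⊢
        linear_combination -this
      exact (smul_eq_zero.mp h2).resolve_left (by simpa using hμ)
    have h1 := Submodule.finrank_add_finrank_le_of_disjoint hdisj
    rw [LinearEquiv.finrank_map_eq J W] at h1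
    have h2 : Module.finrank ℝ (Fin n → ℂ) = 2 * n := by
      rw [finrank_real_of_complex, Module.finrank_fin_fun]
    omega

/-- The representation of `G` on `k ^ n` given by a matrix representation. -/
noncomputable abbrev Matrix.toRepresentation {G k : Type*} [Group G] [Field k] {n : ℕ}
    (M : G →* Matrix (Fin n) (Fin n) k) : Representation k G (Fin n → k) :=
  (Matrix.toLinAlgEquiv' : Matrix (Fin n) (Fin n) k ≃ₐ[k] _).toMonoidHom.comp M

/-- The representation of `G` on bilinear forms on `k ^ n`, seen as matrices. -/
def Matrix.formRepresentation {G k : Type*} [Group G] [Field k] {n : ℕ}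
    (M : G →* Matrix (Fin n) (Fin n) k) : Representation k G (Matrix (Fin n) (Fin n) k) where
  toFun g :=
    { toFun A := (M g⁻¹)ᵀ * A * M g⁻¹
      map_add' A B := by rw [mul_add, add_mul]
      map_smul' c A := by simp }
  map_one' := by ext1; simp
  map_mul' g h := by ext1; simp [mul_assoc]

theorem Matrix.mem_invariants_formRepresentation {G k : Type*} [Group G] [Field k] {n : ℕ}
    {M : G →* Matrix (Fin n) (Fin n) k} {A : Matrix (Fin n) (Fin n) k} :
    A ∈ (formRepresentation M).invariants ↔ ∀ g, (M g)ᵀ * A * M g = A :=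
  ⟨fun h g => by simpa [formRepresentation] using h g⁻¹, fun h g => h g⁻¹⟩

theorem Matrix.trace_transpose_comp_congr {k : Type*} [Field k] {n : ℕ}
    (X : Matrix (Fin n) (Fin n) k)
    {f : Matrix (Fin n) (Fin n) k →ₗ[k] Matrix (Fin n) (Fin n) k}
    (hf : ∀ A, f A = (Xᵀ * A * X)ᵀ) : LinearMap.trace k _ f = (X * X).trace := by
  rw [LinearMap.trace_eq_matrix_trace k (Matrix.stdBasis k (Fin n) (Fin n)), Matrix.trace,
    Fintype.sum_prod_type]
  simp only [Matrix.trace, diag_apply, Matrix.mul_apply]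
  refine Finset.sum_congr rfl fun i _ => Finset.sum_congr rfl fun j _ => ?_
  rw [LinearMap.toMatrix_apply, hf, stdBasis_eq_single]
  simp [stdBasis, Matrix.mul_apply, Matrix.single_apply, ite_and, mul_comm]

/-- The Frobenius–Schur indicator is the trace of transposition on invariant bilinear forms. -/
theorem trace_transpose_comp_averageMap {G : Type*} [Group G] [Fintype G]
    [Invertible (Fintype.card G : ℂ)] {n : ℕ} (M : G →* Matrix (Fin n) (Fin n) ℂ) :
    LinearMap.trace ℂ _ ((transposeLinearEquiv (Fin n) (Fin n) ℂ ℂ).toLinearMap ∘ₗ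
      (formRepresentation M).averageMap) =
      (Fintype.card G : ℂ)⁻¹ * ∑ g, (M (g ^ 2)).trace := by
  have h : (transposeLinearEquiv (Fin n) (Fin n) ℂ ℂ).toLinearMap ∘ₗ
      (formRepresentation M).averageMap = (Fintype.card G : ℂ)⁻¹ • ∑ g,
        (transposeLinearEquiv (Fin n) (Fin n) ℂ ℂ).toLinearMap ∘ₗ formRepresentation M g := by
    ext1 A
    simp [Representation.averageMap, GroupAlgebra.average]
  rw [h, map_smul, map_sum, smul_eq_mul]
  congr 1
  refine Fintype.sum_equiv (Equiv.inv G) _ _ fun g => ?_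
  rw [trace_transpose_comp_congr (M g⁻¹) fun A => rfl, ← map_mul, Equiv.inv_apply, sq]

/-- A matrix representation whose Frobenius–Schur indicator is `1` has a nonzero symmetric
invariant bilinear form. -/
theorem exists_isSymm_of_indicator_eq_one {G : Type*} [Group G] [Fintype G] {n : ℕ}
    {M : G →* Matrix (Fin n) (Fin n) ℂ}
    (h : (Fintype.card G : ℂ)⁻¹ * ∑ g, (M (g ^ 2)).trace = 1) :
    ∃ S : Matrix (Fin n) (Fin n) ℂ, S.IsSymm ∧ S ≠ 0 ∧ ∀ g, (M g)ᵀ * S * M g = S := by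
  have : Invertible (Fintype.card G : ℂ) := invertibleOfNonzero (by simp)
  by_contra! hcon
  have hanti : (transposeLinearEquiv (Fin n) (Fin n) ℂ ℂ).toLinearMap ∘ₗ
      (formRepresentation M).averageMap = -(formRepresentation M).averageMap := by
    ext1 A
    have hA := mem_invariants_formRepresentation.mp
      ((formRepresentation M).averageMap_invariant A)
    set B := (formRepresentation M).averageMap A
    change Bᵀ = -B
    rw [eq_neg_iff_add_eq_zero, add_comm]
    by_contra hB
    obtain ⟨g, hg⟩ := hcon (B + Bᵀ) (isSymm_add_transpose_self B) hB
    refine hg ?_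
    conv_rhs => rw [← hA g]
    simp [mul_add, add_mul, mul_assoc]
  rw [← trace_transpose_comp_averageMap M, hanti, map_neg,
    (formRepresentation M).isProj_averageMap.trace] at h
  have := congrArg Complex.re h
  simp only [Complex.neg_re, Complex.natCast_re, Complex.one_re] at this
  linarith [(Nat.cast_nonneg _ :
    (0 : ℝ) ≤ Module.finrank ℂ (formRepresentation M).invariants)]

/-- Schur's lemma for bilinear forms: an irreducible matrix representation has at most one
invariant bilinear form up to scaling. -/
theorem exists_smul_eq_of_isIrreducible {G : Type*} [Group G] {n : ℕ}
    {M : G →* Matrix (Fin n) (Fin n) ℂ} (hM : (toRepresentation M).IsIrreducible)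
    {S A : Matrix (Fin n) (Fin n) ℂ} (h0 : S ≠ 0) (hS : ∀ g, (M g)ᵀ * S * M g = S)
    (hA : ∀ g, (M g)ᵀ * A * M g = A) : ∃ c : ℂ, c • S = A := by
  have hT (g : G) : (M g⁻¹)ᵀ * (M g)ᵀ = 1 := by
    rw [← transpose_mul, ← map_mul, mul_inv_cancel, map_one, transpose_one]
  have hker (B : Matrix (Fin n) (Fin n) ℂ) (hB : ∀ g, (M g)ᵀ * B * M g = B) :
      B = 0 ∨ ∀ v, B *ᵥ v = 0 → v = 0 := by
    let p : Subrepresentation (toRepresentation M) :=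
      { toSubmodule := LinearMap.ker B.mulVecLin
        apply_mem_toSubmodule g v hv := by
          have hv' : B *ᵥ v = 0 := hv
          change B *ᵥ (M g *ᵥ v) = 0
          have : B * M g = (M g⁻¹)ᵀ * B := by
            conv_rhs => rw [← hB g]
            rw [← mul_assoc, ← mul_assoc, hT, one_mul]
          rw [mulVec_mulVec, this, ← mulVec_mulVec, hv', mulVec_zero] }
    rcases hM.eq_bot_or_eq_top p with h | h
    · right
      intro v hv
      have : v ∈ p.toSubmodule := hv
      rw [h] at this
      exact this
    · left
      refine Matrix.ext_of_mulVec_single fun j => ?_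
      have : Pi.single j 1 ∈ p.toSubmodule := by rw [h]; trivial
      rw [zero_mulVec]
      exact this
  have hinj := (hker S hS).resolve_left h0
  have hne : Nonempty (Fin n) := by
    by_contra h
    rw [not_nonempty_iff] at h
    exact h0 (Subsingleton.elim _ _)
  have hunit : IsUnit S := mulVec_injective_iff_isUnit.mp <| by
    exact (injective_iff_map_eq_zero S.mulVecLin).mpr hinj
  obtain ⟨c, hc⟩ := Module.End.exists_eigenvalue (S⁻¹ * A).mulVecLin
  obtain ⟨v, hv⟩ := hc.exists_hasEigenvector
  have hv1 : (S⁻¹ * A) *ᵥ v = c • v := hv.apply_eq_smul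
  refine ⟨c, (sub_eq_zero.mp ((hker (A - c • S) fun g => ?_).resolve_right fun h => ?_)).symm⟩
  · rw [mul_sub, sub_mul, hA, Matrix.mul_smul, Matrix.smul_mul, hS]
  · refine hv.2 (h v ?_)
    have := congrArg (S *ᵥ ·) hv1
    simp only [mulVec_mulVec] at this
    rw [← mul_assoc, mul_nonsing_inv _ ((isUnit_iff_isUnit_det S).mp hunit), one_mul,
      mulVec_smul] at this
    rw [sub_mulVec, this, smul_mulVec, sub_self]

/-- An irreducible matrix representation with a nonzero symmetric invariant bilinear form has
Frobenius–Schur indicator `1`. -/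
theorem indicator_eq_one_of_isSymm {G : Type*} [Group G] [Fintype G] {n : ℕ}
    {M : G →* Matrix (Fin n) (Fin n) ℂ} (hM : (toRepresentation M).IsIrreducible)
    {S : Matrix (Fin n) (Fin n) ℂ} (hS : S.IsSymm) (h0 : S ≠ 0)
    (hinv : ∀ g, (M g)ᵀ * S * M g = S) :
    (Fintype.card G : ℂ)⁻¹ * ∑ g, (M (g ^ 2)).trace = 1 := by
  have : Invertible (Fintype.card G : ℂ) := invertibleOfNonzero (by simp)
  have hspan {A} (hA : A ∈ (formRepresentation M).invariants) : ∃ c : ℂ, c • S = A :=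
    exists_smul_eq_of_isIrreducible hM h0 hinv (mem_invariants_formRepresentation.mp hA)
  have hsymm : (transposeLinearEquiv (Fin n) (Fin n) ℂ ℂ).toLinearMap ∘ₗ
      (formRepresentation M).averageMap = (formRepresentation M).averageMap := by
    ext1 A
    obtain ⟨c, hc⟩ := hspan ((formRepresentation M).averageMap_invariant A)
    rw [LinearMap.comp_apply, ← hc]
    exact hS.smul c
  have hrank : Module.finrank ℂ (formRepresentation M).invariants = 1 := by
    refine finrank_eq_one ⟨S, mem_invariants_formRepresentation.mpr hinv⟩ ?_ fun A => ?_
    · simpa [Subtype.ext_iff] using h0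
    · obtain ⟨c, hc⟩ := hspan A.2
      exact ⟨c, Subtype.ext hc⟩
  rw [← trace_transpose_comp_averageMap M, hsymm,
    (formRepresentation M).isProj_averageMap.trace, hrank, Nat.cast_one]

theorem Representation.Equiv.isIrreducible {G k V W : Type*} [Group G] [Field k]
    [AddCommGroup V] [Module k V] [AddCommGroup W] [Module k W] {ρ : Representation k G V}
    {σ : Representation k G W} (e : ρ.Equiv σ) (hρ : ρ.IsIrreducible) : σ.IsIrreducible := by
  have hcomm (g : G) (v : V) : e (ρ g v) = σ g (e v) :=
    LinearMap.congr_fun (e.isIntertwining' g) v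
  let f : Subrepresentation σ ≃o Subrepresentation ρ :=
    { toFun p := ⟨p.toSubmodule.comap e.toLinearEquiv.toLinearMap, fun g v hv => by
        change e (ρ g v) ∈ p.toSubmodule
        rw [hcomm]
        exact p.apply_mem_toSubmodule g hv⟩
      invFun p := ⟨p.toSubmodule.map e.toLinearEquiv.toLinearMap, by
        rintro g _ ⟨v, hv, rfl⟩
        exact ⟨ρ g v, p.apply_mem_toSubmodule g hv, hcomm g v⟩⟩
      left_inv p := Subrepresentation.toSubmodule_injective <|
        Submodule.map_comap_eq_of_surjective e.toLinearEquiv.surjective _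
      right_inv p := Subrepresentation.toSubmodule_injective <|
        Submodule.comap_map_eq_of_injective e.toLinearEquiv.injective _
      map_rel_iff' {p q} :=
        Submodule.comap_le_comap_iff_of_surjective e.toLinearEquiv.surjective }
  exact (OrderIso.isSimpleOrder_iff f).mpr hρ

/-- Every finite-dimensional complex representation of a finite group is given by unitary
matrices in a suitable basis. -/
theorem Representation.exists_equiv_unitary {G V : Type*} [Group G] [Fintype G] [AddCommGroup V]
    [Module ℂ V] [FiniteDimensional ℂ V] (ρ : Representation ℂ G V) :
    ∃ M : G →* Matrix (Fin (Module.finrank ℂ V)) (Fin (Module.finrank ℂ V)) ℂ,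
      (∀ g, M g ∈ unitaryGroup _ ℂ) ∧ Nonempty (ρ.Equiv (toRepresentation M)) := by
  let b := Module.finBasis ℂ V
  let N := (LinearMap.toMatrixAlgEquiv b).toMonoidHom.comp ρ
  obtain ⟨R, hR⟩ := exists_units_conj_mem_unitaryGroup N
  let M : G →* Matrix (Fin (Module.finrank ℂ V)) (Fin (Module.finrank ℂ V)) ℂ :=
    { toFun g := R.val * N g * R⁻¹.val
      map_one' := by simp
      map_mul' g h := by simp [mul_assoc] }
  let r : (Fin (Module.finrank ℂ V) → ℂ) ≃ₗ[ℂ] (Fin (Module.finrank ℂ V) → ℂ) :=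
    Matrix.toLin'OfInv (M := R⁻¹.val) (M' := R.val) (by simp) (by simp)
  refine ⟨M, hR, ⟨Representation.Equiv.mk (b.equivFun.trans r) fun g => ?_⟩⟩
  ext1 v
  change R.val *ᵥ (b.equivFun (ρ g v)) = (R.val * N g * R⁻¹.val) *ᵥ (R.val *ᵥ b.equivFun v)
  rw [mulVec_mulVec, mul_assoc _ _ R.val, Units.inv_mul, mul_one, ← mulVec_mulVec]
  congr 1
  exact (LinearMap.toMatrix_mulVec_repr b b (ρ g) v).symm

theorem Representation.Equiv.character_eq_trace {G k V : Type*} [Group G] [Field k]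
    [AddCommGroup V] [Module k V] {ρ : Representation k G V} {n : ℕ}
    {M : G →* Matrix (Fin n) (Fin n) k} (e : ρ.Equiv (toRepresentation M)) (g : G) :
    ρ.character g = (M g).trace := by
  rw [Representation.char_iso e]
  exact Matrix.trace_toLin'_eq (M g)

open CategoryTheory in
/-- The representation underlying a simple object is irreducible. -/
theorem FDRep.isIrreducible_ρ {G : Type*} {k : Type*} [Group G] [Field k] (V : FDRep k G)
    [Simple V] : Representation.IsIrreducible V.ρ := by
  have hnt : Nontrivial V := by
    by_contra h
    rw [not_nontrivial_iff_subsingleton] at h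
    apply Simple.not_isZero V
    rw [Limits.IsZero.iff_id_eq_zero]
    ext v
    exact Subsingleton.elim _ _
  have : Nontrivial (Subrepresentation V.ρ) := by
    refine ⟨⊥, ⊤, fun h => ?_⟩
    have : (⊥ : Submodule k V) = ⊤ := congrArg Subrepresentation.toSubmodule h
    exact bot_ne_top this
  refine ⟨fun p => ?_⟩
  let i : FDRep.of p.toRepresentation ⟶ V :=
    ⟨FGModuleCat.ofHom p.toSubmodule.subtype, fun g => by ext v; rfl⟩
  have hi : Mono i := by
    refine ConcreteCategory.mono_of_injective i ?_
    exact p.toSubmodule.injective_subtype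
  by_cases h : i = 0
  · left
    refine Subrepresentation.toSubmodule_injective ((Submodule.eq_bot_iff _).mpr fun v hv => ?_)
    exact congrArg (fun f : FDRep.of p.toRepresentation ⟶ V => f.hom.hom.hom ⟨v, hv⟩) h
  · right
    have := isIso_of_mono_of_nonzero h
    refine Subrepresentation.toSubmodule_injective (Submodule.eq_top_iff'.mpr fun v => ?_)
    have hv : i.hom.hom.hom ((inv i).hom.hom.hom v) = v :=
      congrArg (fun f : V ⟶ V => f.hom.hom.hom v) (IsIso.inv_hom_id i)
    rw [← hv]
    exact Subtype.property (p := (· ∈ p.toSubmodule)) ((inv i).hom.hom.hom v)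

open CategoryTheory in
/-- An irreducible complex representation of a finite group gives a simple object. -/
theorem FDRep.simple_of_isIrreducible {G V : Type} [Group G] [Fintype G] [AddCommGroup V]
    [Module ℂ V] [FiniteDimensional ℂ V] {ρ : Representation ℂ G V} (hρ : ρ.IsIrreducible) :
    Simple (FDRep.of ρ) := by
  have : Invertible (Nat.card G : ℂ) := invertibleOfNonzero (by simp)
  have h := ρ.card_inv_mul_sum_char_mul_char_eq_finrank ρ
  rw [Representation.IsIrreducible.finrank_intertwiningMap_self, Nat.cast_one,
    inv_mul_eq_one₀ (by simp)] at h
  exact (FDRep.simple_iff_char_is_norm_one _).mpr h.symm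

/-- The vectors fixed by a conjugation-invariant set of group elements form a subrepresentation. -/
def Representation.fixedSubrepresentation {G k V : Type*} [Group G] [Field k] [AddCommGroup V]
    [Module k V] (ρ : Representation k G V) (K : Set G)
    (hK : ∀ g, ∀ x ∈ K, g * x * g⁻¹ ∈ K) : Subrepresentation ρ where
  toSubmodule :=
    { carrier := {v | ∀ x ∈ K, ρ x v = v}
      add_mem' ha hb x hx := by rw [map_add, ha x hx, hb x hx]
      zero_mem' x _ := map_zero _
      smul_mem' c a ha x hx := by rw [map_smul, ha x hx] }
  apply_mem_toSubmodule g v hv x hx := by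
    have h := hv (g⁻¹ * x * g) (by simpa using hK g⁻¹ x hx)
    calc ρ x (ρ g v) = ρ g (ρ (g⁻¹ * x * g) v) := by
          simp only [← Module.End.mul_apply, ← map_mul]
          congr 2
          group
      _ = ρ g v := by rw [h]

/-- Over a finite group, a nonzero invariant real subspace of dimension at most `d` of an
irreducible matrix representation forces every element killed by all orthogonal representations
of dimension `d` to act trivially. -/
theorem eq_one_of_real_submodule {G : Type*} [Group G] [Fintype G] {n d : ℕ}
    {M : G →* Matrix (Fin n) (Fin n) ℂ} (hM : (toRepresentation M).IsIrreducible)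
    {W : Submodule ℝ (Fin n → ℂ)} (hW : W ≠ ⊥) (hinv : ∀ g, ∀ v ∈ W, M g *ᵥ v ∈ W)
    (hd : Module.finrank ℝ W ≤ d) {g : G}
    (hg : g ∈ ⨅ ψ : G →* Matrix.orthogonalGroup (Fin d) ℝ, ψ.ker) : M g = 1 := by
  let σ : Representation ℝ G W :=
    { toFun g := ((toRepresentation M g).restrictScalars ℝ).restrict (hinv g)
      map_one' := by ext1 v; exact Subtype.ext (by simp)
      map_mul' g h := by ext1 v; exact Subtype.ext (by simp) }
  obtain ⟨ψ, hψ⟩ := σ.exists_orthogonalGroup_hom hd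
  let K : Set G := ((⨅ ψ : G →* Matrix.orthogonalGroup (Fin d) ℝ, ψ.ker : Subgroup G) : Set G)
  have hK : ∀ g, ∀ x ∈ K, g * x * g⁻¹ ∈ K := by
    intro g x hx
    simp only [K, SetLike.mem_coe, Subgroup.mem_iInf] at hx ⊢
    exact fun φ => φ.normal_ker.conj_mem x (hx φ) g
  have htop := (hM.eq_bot_or_eq_top
    ((toRepresentation M).fixedSubrepresentation K hK)).resolve_left fun h => hW <| by
      rw [Submodule.eq_bot_iff]
      intro w hw
      have : w ∈ ((toRepresentation M).fixedSubrepresentation K hK).toSubmodule := by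
        intro x hx
        have hx1 := LinearMap.congr_fun (hψ x (Subgroup.mem_iInf.mp hx ψ)) ⟨w, hw⟩
        exact congrArg Subtype.val hx1
      rw [h] at this
      exact this
  refine Matrix.ext_of_mulVec_single fun j => ?_
  have : Pi.single j 1 ∈ ((toRepresentation M).fixedSubrepresentation K hK).toSubmodule := by
    rw [htop]; trivial
  rw [one_mulVec]
  exact this g hg

open scoped ComplexOrder in
/-- An irreducible constituent `q` of the complexification of an orthogonal representation of
dimension `d` has real degree at most `d`. -/
theorem realDeg_le_of_equiv_subrepresentation {G : Type} [Group G] [Fintype G] {n d : ℕ}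
    {N : G →* Matrix (Fin d) (Fin d) ℂ} (hNt : ∀ g, (N g)ᵀ * N g = 1)
    {q : Subrepresentation (toRepresentation N)} (hq : q.toRepresentation.IsIrreducible)
    {M : G →* Matrix (Fin n) (Fin n) ℂ} (e : q.toRepresentation.Equiv (toRepresentation M)) :
    realDeg (FDRep.of (toRepresentation M)) ≤ d := by
  have hchar (g : G) : (FDRep.of (toRepresentation M)).character g = (M g).trace :=
    Matrix.trace_toLin'_eq (M g)
  have hfin : Module.finrank ℂ (FDRep.of (toRepresentation M)) = n :=
    Module.finrank_fin_fun ℂ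
  have hqn : Module.finrank ℂ q.toSubmodule = n :=
    e.toLinearEquiv.finrank_eq.trans (Module.finrank_fin_fun ℂ)
  have hM := e.isIrreducible hq
  let J : (Fin d → ℂ) ≃ₗ[ℝ] (Fin d → ℂ) :=
    { toFun := star
      invFun := star
      left_inv := star_star
      right_inv := star_star
      map_add' := star_add
      map_smul' c v := by rw [star_smul, star_trivial]; rfl }
  let Q : Submodule ℝ (Fin d → ℂ) := q.toSubmodule.restrictScalars ℝ
  have hQ : Module.finrank ℝ Q = 2 * n := by
    rw [← hqn]
    exact finrank_real_of_complex q.toSubmodule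
  unfold realDeg
  simp only [hchar, hfin]
  by_cases hdisj : Disjoint Q (Q.map J.toLinearMap)
  · have h1 := Submodule.finrank_add_finrank_le_of_disjoint hdisj
    rw [LinearEquiv.finrank_map_eq J Q, hQ, finrank_real_of_complex, Module.finrank_fin_fun] at h1
    split_ifs <;> omega
  · obtain ⟨u, hu, hu', hu0⟩ : ∃ u ∈ q.toSubmodule, star u ∈ q.toSubmodule ∧ u ≠ 0 := by
      rw [Submodule.disjoint_def] at hdisj
      push Not at hdisj
      obtain ⟨u, hu, ⟨w, hw, rfl⟩, hu0⟩ := hdisj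
      refine ⟨_, hu, ?_, hu0⟩
      have : star (star w) ∈ q.toSubmodule := by rwa [star_star]
      exact this
    obtain ⟨E, hE⟩ : ∃ E : Matrix (Fin d) (Fin n) ℂ,
        ∀ x, E *ᵥ x = (e.toLinearEquiv.symm x : Fin d → ℂ) :=
      ⟨LinearMap.toMatrix' (q.toSubmodule.subtype ∘ₗ e.toLinearEquiv.symm.toLinearMap),
        LinearMap.toMatrix'_mulVec _⟩
    have hEu (v : q.toSubmodule) : E *ᵥ e.toLinearEquiv v = v := by
      rw [hE, LinearEquiv.symm_apply_apply]
    have hcomm (g : G) : E * M g = N g * E := by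
      refine Matrix.ext_of_mulVec_single fun j => ?_
      rw [← mulVec_mulVec, ← mulVec_mulVec]
      set x : Fin n → ℂ := Pi.single j 1
      obtain ⟨v, hv⟩ := e.toLinearEquiv.surjective x
      have h1 : M g *ᵥ x = e.toLinearEquiv (q.toRepresentation g v) := by
        rw [← hv]
        exact (LinearMap.congr_fun (e.isIntertwining' g) v).symm
      rw [h1, hEu, ← hv, hEu]
      rfl
    have hS0 : Eᵀ * E ≠ 0 := by
      intro h
      have h1 : star u ⬝ᵥ u = 0 := by
        have h2 : (E *ᵥ e.toLinearEquiv ⟨star u, hu'⟩) ⬝ᵥ (E *ᵥ e.toLinearEquiv ⟨u, hu⟩) = 0 := by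
          rw [← vecMul_transpose, ← dotProduct_mulVec, mulVec_mulVec, h, zero_mulVec,
            dotProduct_zero]
        rwa [hEu, hEu] at h2
      exact hu0 (dotProduct_star_self_eq_zero.mp h1)
    have hinv (g : G) : (M g)ᵀ * (Eᵀ * E) * M g = Eᵀ * E := by
      calc (M g)ᵀ * (Eᵀ * E) * M g = (E * M g)ᵀ * (E * M g) := by
            simp only [transpose_mul, Matrix.mul_assoc]
        _ = Eᵀ * ((N g)ᵀ * N g) * E := by rw [hcomm]; simp only [transpose_mul, Matrix.mul_assoc]
        _ = Eᵀ * E := by rw [hNt, Matrix.mul_one]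
    have hsymm : (Eᵀ * E).IsSymm := by rw [IsSymm, transpose_mul, transpose_transpose]
    rw [if_pos (indicator_eq_one_of_isSymm hM hsymm hS0 hinv)]
    exact hqn.symm.trans_le ((Submodule.finrank_le _).trans_eq (Module.finrank_fin_fun ℂ))

/-- A nonzero subrepresentation of a finite-dimensional representation contains an irreducible
one. -/
theorem Subrepresentation.exists_isIrreducible_le {G k V : Type*} [Group G] [Field k]
    [AddCommGroup V] [Module k V] [FiniteDimensional k V] {ρ : Representation k G V}
    {c : Subrepresentation ρ} (hc : c ≠ ⊥) :
    ∃ q ≤ c, q ≠ ⊥ ∧ q.toRepresentation.IsIrreducible := by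
  have : WellFoundedLT (Subrepresentation ρ) :=
    ⟨(InvImage.wf Subrepresentation.toSubmodule wellFounded_lt)⟩
  obtain ⟨q, hq, hmin⟩ := exists_minimal_le_of_wellFoundedLT (fun p => p ≠ ⊥) c hc
  refine ⟨q, hq, hmin.1, ?_⟩
  have hne : (⊥ : Subrepresentation q.toRepresentation) ≠ ⊤ := fun h => hmin.1 <| by
    refine le_bot_iff.mp fun v hv => ?_
    have h1 : (⟨v, hv⟩ : q.toSubmodule) ∈ (⊥ : Subrepresentation q.toRepresentation) := by
      rw [h]; trivial
    exact congrArg Subtype.val (show (⟨v, hv⟩ : q.toSubmodule) = 0 from h1)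
  have : Nontrivial (Subrepresentation q.toRepresentation) := ⟨⟨_, _, hne⟩⟩
  refine { eq_bot_or_eq_top := fun p => or_iff_not_imp_left.mpr fun hp => ?_ }
  let p' : Subrepresentation ρ :=
    { toSubmodule := p.toSubmodule.map q.toSubmodule.subtype
      apply_mem_toSubmodule := by
        rintro g _ ⟨v, hv, rfl⟩
        exact ⟨_, p.apply_mem_toSubmodule g hv, rfl⟩ }
  have hp' : p' ≠ ⊥ := fun h => hp <| by
    refine le_bot_iff.mp fun v hv => ?_
    have h1 : (v : V) ∈ p' := ⟨v, hv, rfl⟩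
    rw [h] at h1
    exact Subtype.ext (show (v : V) = 0 from h1)
  have hle : p' ≤ q := by
    rintro _ ⟨v, -, rfl⟩
    exact v.2
  refine top_le_iff.mp fun v _ => ?_
  obtain ⟨w, hw, hwv⟩ := hmin.2 hp' hle v.2
  rwa [← Subtype.ext hwv]

theorem stmt14 (G : Type) [Group G] [Fintype G] (d : ℕ) (hd : 1 ≤ d) :
    ((⨅ ψ : G →* Matrix.orthogonalGroup (Fin d) ℝ, ψ.ker : Subgroup G) : Set G) =
      ⋂ V ∈ {V : FDRep ℂ G | CategoryTheory.Simple V ∧ realDeg V ≤ d},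
        {g : G | V.character g = V.character 1} := by
  ext g
  simp only [SetLike.mem_coe, Set.mem_iInter, Set.mem_ofPred_eq]
  constructor
  · rintro hg V ⟨hV, hdeg⟩
    obtain ⟨M, hMu, ⟨e⟩⟩ := Representation.exists_equiv_unitary V.ρ
    have hM := e.isIrreducible V.isIrreducible_ρ
    have hchar (g : G) : V.character g = (M g).trace := e.character_eq_trace g
    suffices h : M g = 1 by rw [hchar, hchar, h, map_one]
    unfold realDeg at hdeg
    simp only [hchar] at hdeg
    split_ifs at hdeg with hι
    · obtain ⟨S, hS, h0, hinv⟩ := exists_isSymm_of_indicator_eq_one hι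
      obtain ⟨W, hW, hWinv, hWd⟩ := exists_real_submodule_of_isSymm hMu hS h0 hinv
      exact eq_one_of_real_submodule hM hW hWinv (hWd.trans hdeg) hg
    · refine eq_one_of_real_submodule hM (W := ⊤) (fun h => ?_) (fun _ _ _ => trivial) ?_ hg
      · have h1 : (⊥ : Subrepresentation (toRepresentation M)) = ⊤ :=
          Subrepresentation.toSubmodule_injective <| (Submodule.restrictScalars_injective ℝ ℂ _)
            h.symm
        exact hM.bot_ne_top h1
      · rwa [finrank_top, finrank_real_of_complex, Module.finrank_fin_fun]
  · intro hg
    rw [Subgroup.mem_iInf]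
    intro ψ
    let N : G →* Matrix (Fin d) (Fin d) ℂ :=
      (Complex.ofRealHom.mapMatrix : Matrix (Fin d) (Fin d) ℝ →+* _).toMonoidHom.comp
        ((Matrix.orthogonalGroup (Fin d) ℝ).subtype.comp ψ)
    have hN (x : G) : N x = (ψ x).val.map Complex.ofReal := rfl
    have hNt (x : G) : (N x)ᵀ * N x = 1 := by
      have h := congrArg (Complex.ofRealHom.mapMatrix)
        ((Matrix.mem_orthogonalGroup_iff' (Fin d) ℝ).mp (ψ x).2)
      rw [map_mul, map_one] at h
      exact h
    let K : Set G := {x | ∀ V : FDRep ℂ G, CategoryTheory.Simple V ∧ realDeg V ≤ d →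
      V.character x = V.character 1}
    have hK : ∀ y, ∀ x ∈ K, y * x * y⁻¹ ∈ K := fun y x hx V hV => by
      rw [FDRep.char_conj]
      exact hx V hV
    have htop : (toRepresentation N).fixedSubrepresentation K hK = ⊤ := by
      have : NeZero (Nat.card G : ℂ) := ⟨by simp⟩
      obtain ⟨c, hc⟩ := exists_isCompl ((toRepresentation N).fixedSubrepresentation K hK)
      by_contra hne
      obtain ⟨q, hqc, hq0, hq⟩ := Subrepresentation.exists_isIrreducible_le
        (fun h : c = ⊥ => hne (by simpa [h] using hc.sup_eq_top))
      obtain ⟨M, hMu, ⟨e⟩⟩ := Representation.exists_equiv_unitary q.toRepresentation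
      refine hq0 (le_bot_iff.mp (hc.disjoint ?_ hqc))
      intro v hv x hx
      have h1 := hx (FDRep.of (toRepresentation M))
        ⟨FDRep.simple_of_isIrreducible (e.isIrreducible hq),
          realDeg_le_of_equiv_subrepresentation hNt hq e⟩
      have h2 : M x = 1 := by
        refine Matrix.eq_one_of_mem_unitaryGroup_of_trace_eq (hMu x) ?_
        rw [Fintype.card_fin, ← Matrix.trace_toLin'_eq]
        exact h1.trans ((FDRep.char_one _).trans (congrArg Nat.cast (Module.finrank_fin_fun ℂ)))
      have h3 : e.toLinearEquiv (q.toRepresentation x ⟨v, hv⟩) = e.toLinearEquiv ⟨v, hv⟩ := by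
        refine (LinearMap.congr_fun (e.isIntertwining' x) ⟨v, hv⟩).trans ?_
        change M x *ᵥ _ = _
        rw [h2, one_mulVec]
        rfl
      exact congrArg Subtype.val (e.toLinearEquiv.injective h3)
    have hN1 : N g = 1 := by
      refine Matrix.ext_of_mulVec_single fun j => ?_
      have : Pi.single j 1 ∈
          ((toRepresentation N).fixedSubrepresentation K hK).toSubmodule := by
        rw [htop]; trivial
      rw [one_mulVec]
      exact this g hg
    rw [MonoidHom.mem_ker]
    ext i j
    have := congrFun₂ hN1 i j
    rw [hN, map_apply] at this
    apply Complex.ofReal_injective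
    rw [this]
    simp [Matrix.one_apply, apply_ite]
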